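/- Let a ≥ 2 be a natural number, let n ≥ 1, and let B > 0. Then there exists a constant C > 0 (depending only on a and B) such that for every u₀ with 0 < u₀ ≤ 1, every u ∈ ℝ with |u − u₀| ≤ u₀^a, every z ∈ ℂⁿ with ‖z‖ ≤ B and every β ∈ ℝ with |β| ≤ B, one has |u^a · u₀^{−a} − 1| · ‖z‖ + 2a · |u|^{2a−1} · u₀^{−a} · |β| ≤ C · u₀^{a−1}. In particular the vector ( (u^a u₀^{−a} − 1) · z, −2a u^{2a−1} u₀^{−a} β · i ) ∈ ℂⁿ × ℂ has norm at most √2 · C · u₀^{a−1}. -/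

import Mathlib

/-! Write `u = t u₀`. The hypothesis `|u - u₀| ≤ u₀^a` becomes `|t - 1| ≤ u₀^(a-1) ≤ 1`, so
`|t| ≤ 2`. Then `u^a u₀^(-a) - 1 = t^a - 1` is controlled by `a 2^(a-1) |t - 1|`, and
`|u|^(2a-1) u₀^(-a) = |t|^(2a-1) u₀^(a-1)`, which gives the estimate with
`C = B (a 2^(a-1) + 2a 2^(2a-1))`. The norm on the product `ℂⁿ × ℂ` is the maximum of the two
component norms, hence at most their sum, which is the left-hand side of the first estimate. -/

/-- Key estimate in the comparison of the Lagrangian correction `X₂` with the cylinder model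
`u₀^a L × ℝ`: for `|u − u₀| ≤ u₀^a`, `‖z‖ ≤ B`, `|β| ≤ B`, one has
`|u^a u₀^(−a) − 1| ‖z‖ + 2a |u|^(2a−1) u₀^(−a) |β| ≤ C u₀^(a−1)`, and the corresponding
difference vector in `ℂⁿ × ℂ` has norm at most `√2 C u₀^(a−1)`. -/
theorem stmt_12 (a n : ℕ) (ha : 2 ≤ a) (hn : 1 ≤ n) (B : ℝ) (hB : 0 < B) :
    ∃ C : ℝ, 0 < C ∧
      ∀ u₀ : ℝ, 0 < u₀ → u₀ ≤ 1 →
        ∀ u : ℝ, |u - u₀| ≤ u₀ ^ a →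
          ∀ z : EuclideanSpace ℂ (Fin n), ‖z‖ ≤ B →
            ∀ β : ℝ, |β| ≤ B →
              (|u ^ a * (u₀ ^ a)⁻¹ - 1| * ‖z‖
                  + 2 * a * |u| ^ (2 * a - 1) * (u₀ ^ a)⁻¹ * |β| ≤ C * u₀ ^ (a - 1)) ∧
              ‖(((u ^ a * (u₀ ^ a)⁻¹ - 1 : ℝ) • z,
                  ((-(2 * (a : ℝ)) * u ^ (2 * a - 1) * (u₀ ^ a)⁻¹ * β : ℝ) : ℂ) * Complex.I) :
                  EuclideanSpace ℂ (Fin n) × ℂ)‖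
                ≤ Real.sqrt 2 * C * u₀ ^ (a - 1) := by
  have ha0 : (0 : ℝ) < a := by exact_mod_cast (by omega : 0 < a)
  refine ⟨B * (a * 2 ^ (a - 1) + 2 * a * 2 ^ (2 * a - 1)), by positivity, ?_⟩
  intro u₀ h0 h1 u hu z hz β hβ
  obtain ⟨t, rfl⟩ : ∃ t, u = t * u₀ := ⟨u / u₀, by field_simp⟩
  have hpow : u₀ ^ a = u₀ ^ (a - 1) * u₀ := by
    rw [← pow_succ]; congr 1; omega
  have ht : |t - 1| ≤ u₀ ^ (a - 1) := by
    have h : |t * u₀ - u₀| = |t - 1| * u₀ := by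
      rw [← sub_one_mul, abs_mul, abs_of_pos h0]
    rw [h, hpow] at hu
    exact le_of_mul_le_mul_right hu h0
  have hle1 : u₀ ^ (a - 1) ≤ 1 := pow_le_one₀ h0.le h1
  have ht2 : |t| ≤ 2 := by
    have := abs_le.mp (ht.trans hle1)
    exact abs_le.mpr ⟨by linarith, by linarith⟩
  have e1 : (t * u₀) ^ a * (u₀ ^ a)⁻¹ = t ^ a := by
    rw [mul_pow]; field_simp
  have e2 : |t * u₀| ^ (2 * a - 1) * (u₀ ^ a)⁻¹ = |t| ^ (2 * a - 1) * u₀ ^ (a - 1) := by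
    have h : u₀ ^ (2 * a - 1) = u₀ ^ (a - 1) * u₀ ^ a := by
      rw [← pow_add]; congr 1; omega
    rw [abs_mul, abs_of_pos h0, mul_pow, h]; field_simp
  have b1 : |t ^ a - 1| ≤ u₀ ^ (a - 1) * (a * 2 ^ (a - 1)) := by
    have h := abs_pow_sub_pow_le t 1 a
    rw [one_pow, abs_one, mul_assoc] at h
    have hm : max |t| 1 ≤ 2 := max_le ht2 (by norm_num)
    exact h.trans (by gcongr)
  have main : |(t * u₀) ^ a * (u₀ ^ a)⁻¹ - 1| * ‖z‖
      + 2 * a * |t * u₀| ^ (2 * a - 1) * (u₀ ^ a)⁻¹ * |β|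
      ≤ B * (a * 2 ^ (a - 1) + 2 * a * 2 ^ (2 * a - 1)) * u₀ ^ (a - 1) := by
    rw [mul_assoc (2 * (a : ℝ)), e1, e2]
    calc _ ≤ u₀ ^ (a - 1) * (a * 2 ^ (a - 1)) * B
          + 2 * a * (2 ^ (2 * a - 1) * u₀ ^ (a - 1)) * B := by gcongr
      _ = _ := by ring
  refine ⟨main, ?_⟩
  have hs : (1 : ℝ) ≤ Real.sqrt 2 := Real.one_le_sqrt.mpr (by norm_num)
  have hC : 0 ≤ B * (a * 2 ^ (a - 1) + 2 * a * 2 ^ (2 * a - 1)) * u₀ ^ (a - 1) := by positivity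
  have hle := main.trans (le_mul_of_one_le_left hC hs)
  rw [← mul_assoc] at hle
  refine le_trans ?_ hle
  rw [Prod.norm_def, norm_smul, norm_mul, Complex.norm_I, mul_one, Complex.norm_real,
    Real.norm_eq_abs, Real.norm_eq_abs]
  have e3 : |-(2 * (a : ℝ)) * (t * u₀) ^ (2 * a - 1) * (u₀ ^ a)⁻¹ * β|
      = 2 * a * |t * u₀| ^ (2 * a - 1) * (u₀ ^ a)⁻¹ * |β| := by
    rw [abs_mul, abs_mul, abs_mul, abs_neg, abs_pow, abs_of_pos (by positivity : 0 < 2 * (a : ℝ)),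
      abs_of_pos (by positivity : 0 < (u₀ ^ a)⁻¹)]
  rw [e3]
  exact max_le_add_of_nonneg (by positivity) (by positivity)
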